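/- Let h ≥ 1 be an integer. For every ordering d of V there exists a partition of the position set {1,…,n} into consecutive intervals, each of length at most h·k, such that Σ f(|d(u)−d(v)|)·w(u,v), taken over edges {u,v} whose two endpoints' positions lie in the same interval of the partition, is at least (1 − 1/h)·val(d). Consequently, the optimal value of the clustered problem (partition V into clusters of size at most hk and order each cluster separately, summing the Ext-TSP objective over clusters) is at least ((h−1)/h)·OPT. -/

import Mathlib

open Classical in
/-- The Ext-TSP value of an ordering `d` of the vertices of `G`. -/
noncomputable def extVal {V : Type} [Fintype V] (G : SimpleGraph V)
    (w : V → V → ℝ) (f : ℕ → ℝ) (d : V ≃ Fin (Fintype.card V)) : ℝ :=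
  (1 / 2) * ∑ u : V, ∑ v : V,
    if G.Adj u v then f (Nat.dist (d u) (d v)) * w u v else 0

/-!
Cut the positions into cells of length `k` and group `h` consecutive cells into a block; the
grouping can be shifted by `s = 0, …, h - 1` cells. An edge of nonzero value has length at most `k`,
so its endpoints lie in the same cell or in adjacent ones, and at most one of the `h` shifts
separates them. Averaging over `s`, some shift loses at most a `1 / h` fraction of the value. The
clustered bound follows by applying this to an optimal ordering.
-/

open Finset

theorem sum_range_add_div {h : ℕ} (hh : 0 < h) (a : ℕ) : ∑ s ∈ range h, (a + s) / h = a := by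
  induction a with
  | zero => exact sum_eq_zero fun s hs => by simpa using Nat.div_eq_of_lt (mem_range.1 hs)
  | succ a ih =>
    have shift_sum : ∑ s ∈ range h, (a + (s + 1)) / h + a / h =
        ∑ s ∈ range h, (a + s) / h + (a / h + 1) := by
      rw [← Nat.add_div_right a hh]
      exact (sum_range_succ' (fun s => (a + s) / h) h).symm.trans (sum_range_succ _ h)
    simp only [add_right_comm a 1, ← add_assoc a] at shift_sum ⊢
    omega

-- By Hermite's identity `∑ s < h, (a + s) / h = a`, the sums for `a` and `b` differ by the distance
-- of `a` and `b`, and every shift that separates the two points accounts for at least one unit.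
theorem card_filter_add_div_ne_le_dist (h a b : ℕ) :
    #{s ∈ range h | (a + s) / h ≠ (b + s) / h} ≤ Nat.dist a b := by
  rcases h.eq_zero_or_pos with rfl | hh
  · simp
  wlog hab : a ≤ b generalizing a b
  · simpa only [Nat.dist_comm a b, ne_comm] using this b a (le_of_not_ge hab)
  rw [Nat.dist_eq_sub_of_le hab, Nat.le_sub_iff_add_le' hab]
  calc a + #{s ∈ range h | (a + s) / h ≠ (b + s) / h}
      = ∑ s ∈ range h, ((a + s) / h + if (a + s) / h ≠ (b + s) / h then 1 else 0) := by
        rw [sum_add_distrib, sum_range_add_div hh, card_filter]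
    _ ≤ ∑ s ∈ range h, (b + s) / h := by
        gcongr with s
        have : (a + s) / h ≤ (b + s) / h := by gcongr
        split_ifs <;> omega
    _ = b := sum_range_add_div hh b

theorem nat_dist_div_le_one {k a b : ℕ} (hk : 0 < k) (hab : Nat.dist a b ≤ k) :
    Nat.dist (a / k) (b / k) ≤ 1 := by
  have div_le_succ (x y : ℕ) (hxy : x ≤ y + k) : x / k ≤ y / k + 1 :=
    (Nat.div_le_div_right hxy).trans_eq (Nat.add_div_right y hk)
  rw [Nat.dist] at hab ⊢
  have := div_le_succ a b (by omega)
  have := div_le_succ b a (by omega)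
  omega

/-- The index of the block containing position `p` when the positions are cut into consecutive
blocks of length `h * k`, with the cuts moved to the left by `s * k`. Dividing by `k` first reduces
a pair of positions at distance at most `k` to cells at distance at most `1`. -/
def shiftedBlock (h k s p : ℕ) : ℕ := (p / k + s) / h

theorem shiftedBlock_mono (h k s : ℕ) : Monotone (shiftedBlock h k s) :=
  fun p q hpq => by unfold shiftedBlock; gcongr

theorem shiftedBlock_eq_add_mul_div {k : ℕ} (hk : 0 < k) (h s p : ℕ) :
    shiftedBlock h k s p = (p + s * k) / (h * k) := by
  rw [shiftedBlock, ← Nat.add_mul_div_right _ _ hk, Nat.div_div_eq_div_mul, mul_comm k]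

theorem card_filter_shiftedBlock_eq_le {α : Type*} {t : Finset α} {pos : α → ℕ}
    (hpos : Set.InjOn pos t) {h k : ℕ} (hh : 0 < h) (hk : 0 < k) (s j : ℕ) :
    #{x ∈ t | shiftedBlock h k s (pos x) = j} ≤ h * k := by
  calc #{x ∈ t | shiftedBlock h k s (pos x) = j}
      ≤ #(Ico (j * (h * k)) (j * (h * k) + h * k)) := by
        refine card_le_card_of_injOn (fun x => pos x + s * k) ?_ ?_
        · intro x hx
          have hblock := (mem_filter.1 hx).2
          rw [shiftedBlock_eq_add_mul_div hk, Nat.div_eq_iff (by positivity)] at hblock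
          have : 0 < h * k := by positivity
          simp only [coe_Ico, Set.mem_Ico]
          omega
        · exact fun x hx y hy hxy =>
            hpos (mem_filter.1 hx).1 (mem_filter.1 hy).1 (Nat.add_right_cancel hxy)
    _ = h * k := by rw [Nat.card_Ico, Nat.add_sub_cancel_left]

theorem card_filter_shiftedBlock_ne_le_one {k a b : ℕ} (hk : 0 < k) (hab : Nat.dist a b ≤ k)
    (h : ℕ) : #{s ∈ range h | shiftedBlock h k s a ≠ shiftedBlock h k s b} ≤ 1 :=
  (card_filter_add_div_ne_le_dist h (a / k) (b / k)).trans (nat_dist_div_le_one hk hab)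

section Averaging

variable {α K : Type*} [Field K] [LinearOrder K] [IsStrictOrderedRing K] {t : Finset α} {g : α → K}

theorem exists_le_sum_filter_of_card_filter_not_le {σ : Type*} {S : Finset σ} (hS : S.Nonempty)
    (keep : σ → α → Prop) [∀ s, DecidablePred (keep s)] (hg : ∀ x ∈ t, 0 ≤ g x) {m : ℕ}
    (hm : ∀ x ∈ t, g x ≠ 0 → #{s ∈ S | ¬ keep s x} ≤ m) :
    ∃ s ∈ S, (1 - m / #S) * ∑ x ∈ t, g x ≤ ∑ x ∈ t with keep s x, g x := by
  have hcard : (#S : K) ≠ 0 := Nat.cast_ne_zero.2 hS.card_ne_zero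
  have lost_le : ∑ s ∈ S, ∑ x ∈ t with ¬ keep s x, g x ≤ ∑ _s ∈ S, m / #S * ∑ x ∈ t, g x := by
    calc ∑ s ∈ S, ∑ x ∈ t with ¬ keep s x, g x
        = ∑ x ∈ t, #{s ∈ S | ¬ keep s x} * g x := by
          simp only [sum_filter]
          rw [sum_comm]
          simp only [← sum_filter, sum_const, nsmul_eq_mul]
      _ ≤ ∑ x ∈ t, m * g x := by
          refine sum_le_sum fun x hx => ?_
          obtain hzero | hne := eq_or_ne (g x) 0
          · simp only [hzero, mul_zero, le_refl]
          · exact mul_le_mul_of_nonneg_right (Nat.cast_le.2 (hm x hx hne)) (hg x hx)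
      _ = ∑ _s ∈ S, m / #S * ∑ x ∈ t, g x := by
          rw [sum_const, nsmul_eq_mul, ← mul_sum, ← mul_assoc, mul_div_cancel₀ _ hcard]
  obtain ⟨s, hs, hlost⟩ := exists_le_of_sum_le hS lost_le
  refine ⟨s, hs, ?_⟩
  have := sum_filter_add_sum_filter_not t (keep s) g
  linarith

theorem exists_shiftedBlock_le_sum_filter {h k : ℕ} (hh : 0 < h) (hk : 0 < k) (a b : α → ℕ)
    (hg : ∀ x ∈ t, 0 ≤ g x) (hdist : ∀ x ∈ t, g x ≠ 0 → Nat.dist (a x) (b x) ≤ k) :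
    ∃ s, (1 - 1 / h) * ∑ x ∈ t, g x ≤
      ∑ x ∈ t with shiftedBlock h k s (a x) = shiftedBlock h k s (b x), g x := by
  obtain ⟨s, -, hs⟩ := exists_le_sum_filter_of_card_filter_not_le (nonempty_range_iff.2 hh.ne')
    (fun s x => shiftedBlock h k s (a x) = shiftedBlock h k s (b x)) hg
    fun x hx hne => card_filter_shiftedBlock_ne_le_one hk (hdist x hx hne) h
  rw [card_range, Nat.cast_one] at hs
  exact ⟨s, hs⟩

end Averaging

section Clustering

variable {V : Type} [Fintype V] (G : SimpleGraph V) [DecidableRel G.Adj] (w : V → V → ℝ)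
  (f : ℕ → ℝ) (d : V ≃ Fin (Fintype.card V))

/-- The Ext-TSP value of the ordering `d` restricted to the edges inside a cluster, where `c`
maps each position to the label of its cluster. As in `extVal`, the factor `1 / 2` compensates
for summing over ordered pairs. -/
noncomputable def clusteredVal (c : Fin (Fintype.card V) → ℕ) : ℝ :=
  (1 / 2) * ∑ u : V, ∑ v : V,
    if G.Adj u v ∧ c (d u) = c (d v) then f (Nat.dist (d u) (d v)) * w u v else 0

theorem extVal_eq_sum_filter : extVal G w f d =
    (1 / 2) * ∑ e : V × V with G.Adj e.1 e.2, f (Nat.dist (d e.1) (d e.2)) * w e.1 e.2 := by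
  rw [sum_filter, Fintype.sum_prod_type, extVal]
  congr!

theorem clusteredVal_eq_sum_filter (c : Fin (Fintype.card V) → ℕ) : clusteredVal G w f d c =
    (1 / 2) * ∑ e : V × V with G.Adj e.1 e.2 ∧ c (d e.1) = c (d e.2),
      f (Nat.dist (d e.1) (d e.2)) * w e.1 e.2 := by
  rw [sum_filter, Fintype.sum_prod_type, clusteredVal]

variable {G w f} {h k : ℕ}

theorem exists_shiftedBlock_le_clusteredVal (hw : ∀ u v, G.Adj u v → 0 ≤ w u v) (hk : 0 < k)
    (hf_nonneg : ∀ i, 0 ≤ f i) (hf_zero : ∀ i, k < i → f i = 0) (hh : 0 < h) :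
    ∃ s, (1 - 1 / (h : ℝ)) * extVal G w f d ≤
      clusteredVal G w f d (fun p => shiftedBlock h k s p) := by
  obtain ⟨s, hs⟩ := exists_shiftedBlock_le_sum_filter
    (t := {e : V × V | G.Adj e.1 e.2}) (g := fun e => f (Nat.dist (d e.1) (d e.2)) * w e.1 e.2)
    hh hk (fun e => d e.1) (fun e => d e.2)
    (fun e he => mul_nonneg (hf_nonneg _) (hw _ _ (mem_filter.1 he).2))
    (fun e _ hne => not_lt.1 fun hlt => hne (by rw [hf_zero _ hlt, zero_mul]))
  refine ⟨s, ?_⟩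
  rw [extVal_eq_sum_filter, clusteredVal_eq_sum_filter, mul_left_comm, ← filter_filter]
  exact mul_le_mul_of_nonneg_left hs one_half_pos.le

theorem exists_monotone_le_clusteredVal (hw : ∀ u v, G.Adj u v → 0 ≤ w u v) (hk : 0 < k)
    (hf_nonneg : ∀ i, 0 ≤ f i) (hf_zero : ∀ i, k < i → f i = 0) (hh : 0 < h) :
    ∃ c : Fin (Fintype.card V) → ℕ, Monotone c ∧ (∀ j, #{p | c p = j} ≤ h * k) ∧
      (1 - 1 / (h : ℝ)) * extVal G w f d ≤ clusteredVal G w f d c := by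
  obtain ⟨s, hs⟩ := exists_shiftedBlock_le_clusteredVal d hw hk hf_nonneg hf_zero hh
  exact ⟨fun p => shiftedBlock h k s p, (shiftedBlock_mono h k s).comp Fin.val_strictMono.monotone,
    card_filter_shiftedBlock_eq_le Fin.val_injective.injOn hh hk s, hs⟩

theorem extTSP_clustering_general (hw : ∀ u v, G.Adj u v → 0 ≤ w u v) (hk : 0 < k)
    (hf_nonneg : ∀ i, 0 ≤ f i) (hf_zero : ∀ i, k < i → f i = 0) (hh : 0 < h) :
    (∀ d : V ≃ Fin (Fintype.card V), ∃ c : Fin (Fintype.card V) → ℕ,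
      Monotone c ∧ (∀ j, #{p | c p = j} ≤ h * k) ∧
        (1 - 1 / (h : ℝ)) * extVal G w f d ≤ clusteredVal G w f d c) ∧
    ∃ (d : V ≃ Fin (Fintype.card V)) (c : Fin (Fintype.card V) → ℕ),
      Monotone c ∧ (∀ j, #{p | c p = j} ≤ h * k) ∧
        ((h : ℝ) - 1) / h * ⨆ d' : V ≃ Fin (Fintype.card V), extVal G w f d' ≤
          clusteredVal G w f d c := by
  have clustering d := exists_monotone_le_clusteredVal d hw hk hf_nonneg hf_zero hh
  refine ⟨clustering, ?_⟩
  have : Nonempty (V ≃ Fin (Fintype.card V)) := ⟨Fintype.equivFin V⟩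
  obtain ⟨d, hd⟩ := exists_eq_ciSup_of_finite (f := extVal G w f)
  rw [← hd, sub_div, div_self (by positivity)]
  exact ⟨d, clustering d⟩

end Clustering

/-- For every ordering `d` there is a partition of the positions into
consecutive intervals (encoded by a monotone cluster map `c`), each of size at most `h·k`,
such that the Ext-TSP value restricted to edges whose endpoints lie in a common interval is
at least `(1 - 1/h)` times the value of `d`.  Consequently the optimal value of the clustered
problem is at least `((h-1)/h)·OPT`. -/
theorem extTSP_clustering {V : Type} [Fintype V] [DecidableEq V]
    (G : SimpleGraph V) [DecidableRel G.Adj]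
    (w : V → V → ℝ) (hw_symm : ∀ u v, w u v = w v u)
    (hw_pos : ∀ u v, G.Adj u v → 0 < w u v)
    (k : ℕ) (hk : 1 ≤ k)
    (f : ℕ → ℝ) (hf_nonneg : ∀ i, 0 ≤ f i) (hf_mono : Antitone f)
    (hf_one : f 1 = 1) (hf_zero : ∀ i, k < i → f i = 0)
    (h : ℕ) (hh : 1 ≤ h) :
    (∀ d : V ≃ Fin (Fintype.card V),
      ∃ c : Fin (Fintype.card V) → ℕ, Monotone c ∧
        (∀ j : ℕ, (Finset.univ.filter (fun p : Fin (Fintype.card V) => c p = j)).card ≤ h * k) ∧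
        (1 / 2) * (∑ u : V, ∑ v : V,
            if G.Adj u v ∧ c (d u) = c (d v) then f (Nat.dist (d u) (d v)) * w u v else 0)
          ≥ (1 - 1 / (h : ℝ)) * extVal G w f d) ∧
    (∃ (d : V ≃ Fin (Fintype.card V)) (c : Fin (Fintype.card V) → ℕ), Monotone c ∧
      (∀ j : ℕ, (Finset.univ.filter (fun p : Fin (Fintype.card V) => c p = j)).card ≤ h * k) ∧
      (1 / 2) * (∑ u : V, ∑ v : V,
          if G.Adj u v ∧ c (d u) = c (d v) then f (Nat.dist (d u) (d v)) * w u v else 0)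
        ≥ (((h : ℝ) - 1) / (h : ℝ)) *
            ⨆ d' : V ≃ Fin (Fintype.card V), extVal G w f d') := by
  exact extTSP_clustering_general (fun u v huv => (hw_pos u v huv).le) hk hf_nonneg hf_zero hh
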